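/- arXiv:1904.08592 — 2 statements merged into one kernel-verified Lean document; each statement's English description precedes it below -/
import Mathlib

section
/- For all real numbers λ, x and every nonnegative integer n, the reflection formula ℰ_{n,λ}(1−x) = (−1)^n ℰ_{n,−λ}(x) holds. -/
/-!
The formula is read off from exponential generating functions in `ℝ⟦X⟧`.
Let `F_λ(x) = Σ (x)_{n,λ} Xⁿ/n!` (formally `(1+λX)^{x/λ}`) and `E_λ = Σ ℰ_{n,λ} Xⁿ/n!`.
The series `F_λ(x)` is the only solution of `(1+λX) G' = x G` with constant term `1`, which gives
`F_λ(x) F_λ(y) = F_λ(x+y)`. The recursion for the Euler numbers says `E_λ (F_λ(1) + 1) = 2`, and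
the generating function of `ℰ_{n,λ}(x)` is `E_λ F_λ(x)`.

The substitution `X ↦ -X` sends `F_{-λ}(x)` to `F_λ(-x)`. Applied to `E_{-λ} (F_{-λ}(1) + 1) = 2`
and followed by multiplication by `F_λ(1)`, it shows that `E_{-λ}(-X) = E_λ F_λ(1)`. Hence
`E_{-λ} F_{-λ}(x)` is sent to `E_λ F_λ(1) F_λ(-x) = E_λ F_λ(1-x)`.
-/

open Finset

/-- λ-falling factorial: `(x)_{n,λ} = x(x-λ)⋯(x-(n-1)λ)`. -/
noncomputable def fallFac (lam x : ℝ) : ℕ → ℝ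
  | 0 => 1
  | n + 1 => fallFac lam x n * (x - n * lam)

/-- Degenerate Euler numbers, defined by `ℰ_{0,λ}=1` and
`Σ_{l=0}^{n} C(n,l) ℰ_{l,λ} (1)_{n-l,λ} + ℰ_{n,λ} = 0` for `n ≥ 1`. -/
noncomputable def degE (lam : ℝ) : ℕ → ℝ
  | 0 => 1
  | n + 1 => -(1/2) * ∑ l ∈ (Finset.range (n+1)).attach,
      ((n+1).choose l.1 : ℝ) * degE lam l.1 * fallFac lam 1 (n + 1 - l.1)
  decreasing_by exact Finset.mem_range.mp l.2

/-- Degenerate Euler polynomials `ℰ_{n,λ}(x) = Σ_{l=0}^n C(n,l) ℰ_{l,λ} (x)_{n-l,λ}`. -/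
noncomputable def degEP (lam x : ℝ) (n : ℕ) : ℝ :=
  ∑ l ∈ Finset.range (n + 1), (n.choose l : ℝ) * degE lam l * fallFac lam x (n - l)

/-- Degenerate Bernstein polynomials `B_{k,n}(x|λ)` (vanishing for `k > n`). -/
noncomputable def bern (lam x : ℝ) (k n : ℕ) : ℝ :=
  (n.choose k : ℝ) * fallFac lam x k * fallFac lam (1 - x) (n - k)

/-- Two variable degenerate Bernstein polynomials `B_{k,n}(x₁,x₂|λ)`. -/
noncomputable def bern2 (lam x1 x2 : ℝ) (k n : ℕ) : ℝ :=
  (n.choose k : ℝ) * fallFac lam x1 k * fallFac lam (1 - x2) (n - k)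

/-- Higher order degenerate Euler polynomials `ℰ^{(k)}_{n,λ}(x)`. -/
noncomputable def degEPk (lam : ℝ) : ℕ → ℕ → ℝ → ℝ
  | 0, n, x => fallFac lam x n
  | k + 1, n, x => ∑ m ∈ Finset.range (n + 1),
      (n.choose m : ℝ) * degE lam m * degEPk lam k (n - m) x

/-- The exponential generating function `Σ a n Xⁿ/n!` of a real sequence. -/
noncomputable def egf (a : ℕ → ℝ) : PowerSeries ℝ :=
  PowerSeries.mk fun n => a n / (n.factorial : ℝ)

lemma coeff_egf (a : ℕ → ℝ) (n : ℕ) :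
    PowerSeries.coeff n (egf a) = a n / (n.factorial : ℝ) := by
  simp [egf]

lemma egf_injective {a b : ℕ → ℝ} (h : egf a = egf b) (n : ℕ) : a n = b n := by
  have h1 := congrArg (PowerSeries.coeff n) h
  rw [coeff_egf, coeff_egf] at h1
  have h2 : (n.factorial : ℝ) ≠ 0 := by positivity
  field_simp at h1
  exact h1

/-- Products of exponential generating functions correspond to binomial convolutions. -/
lemma egf_mul (a b : ℕ → ℝ) :
    egf a * egf b =
      egf fun n => ∑ l ∈ Finset.range (n + 1), (n.choose l : ℝ) * a l * b (n - l) := by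
  ext n
  rw [PowerSeries.coeff_mul, coeff_egf,
    Finset.Nat.sum_antidiagonal_eq_sum_range_succ_mk, Finset.sum_div]
  refine Finset.sum_congr rfl fun l hl => ?_
  have hln : l ≤ n := Nat.lt_succ_iff.mp (Finset.mem_range.mp hl)
  rw [coeff_egf, coeff_egf, Nat.cast_choose ℝ hln]
  have h1 : (n.factorial : ℝ) ≠ 0 := by positivity
  have h2 : (l.factorial : ℝ) ≠ 0 := by positivity
  have h3 : ((n - l).factorial : ℝ) ≠ 0 := by positivity
  field_simp

lemma evalNegHom_egf (a : ℕ → ℝ) :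
    PowerSeries.evalNegHom (egf a) = egf fun n => (-1 : ℝ) ^ n * a n := by
  ext n
  rw [PowerSeries.evalNegHom, PowerSeries.coeff_rescale, coeff_egf, coeff_egf, mul_div_assoc]

/-- The differential equation `(1 + λX) G' = x G` of `(1 + λX)^{x/λ}`, with the constant
term `1`, determines the series. -/
lemma eq_egf_fallFac (lam x : ℝ) (G : PowerSeries ℝ) (h0 : PowerSeries.coeff 0 G = 1)
    (h : (1 + PowerSeries.C lam * PowerSeries.X) * PowerSeries.derivative ℝ G
      = PowerSeries.C x * G) :
    G = egf (fallFac lam x) := by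
  ext n
  induction n with
  | zero => rw [h0, coeff_egf]; simp [fallFac]
  | succ n ih =>
    have h1 : PowerSeries.coeff (n + 1) G * (n + 1) = (x - n * lam) * PowerSeries.coeff n G := by
      have h2 := congrArg (PowerSeries.coeff n) h
      rw [add_mul, one_mul, mul_assoc, map_add, PowerSeries.coeff_C_mul,
        PowerSeries.coeff_C_mul, PowerSeries.coeff_derivative] at h2
      cases n with
      | zero => simp at h2 ⊢; linarith
      | succ m =>
        rw [PowerSeries.coeff_succ_X_mul, PowerSeries.coeff_derivative] at h2
        push_cast at h2 ⊢
        linear_combination h2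
    rw [ih, coeff_egf] at h1
    rw [coeff_egf, fallFac, Nat.factorial_succ]
    have h2 : (n.factorial : ℝ) ≠ 0 := by positivity
    have h3 : (n + 1 : ℝ) ≠ 0 := by positivity
    push_cast
    field_simp at h1 ⊢
    linear_combination h1

lemma egf_fallFac_ode (lam x : ℝ) :
    (1 + PowerSeries.C lam * PowerSeries.X) *
      PowerSeries.derivative ℝ (egf (fallFac lam x)) = PowerSeries.C x * egf (fallFac lam x) := by
  have key (n : ℕ) : PowerSeries.coeff (n + 1) (egf (fallFac lam x)) * (n + 1) =
      (x - n * lam) * PowerSeries.coeff n (egf (fallFac lam x)) := by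
    rw [coeff_egf, coeff_egf, fallFac, Nat.factorial_succ]
    have h2 : (n.factorial : ℝ) ≠ 0 := by positivity
    have h3 : (n + 1 : ℝ) ≠ 0 := by positivity
    push_cast
    field_simp
  ext n
  rw [add_mul, one_mul, mul_assoc, map_add, PowerSeries.coeff_C_mul,
    PowerSeries.coeff_C_mul, PowerSeries.coeff_derivative, key]
  cases n with
  | zero => simp
  | succ m =>
    rw [PowerSeries.coeff_succ_X_mul, PowerSeries.coeff_derivative]
    push_cast
    ring

lemma egf_fallFac_add (lam x y : ℝ) :
    egf (fallFac lam x) * egf (fallFac lam y) = egf (fallFac lam (x + y)) := by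
  apply eq_egf_fallFac
  · rw [egf_mul, coeff_egf]
    simp [fallFac]
  · have hx := egf_fallFac_ode lam x
    have hy := egf_fallFac_ode lam y
    rw [Derivation.leibniz, smul_eq_mul, smul_eq_mul, map_add]
    linear_combination egf (fallFac lam y) * hx + egf (fallFac lam x) * hy

lemma egf_fallFac_zero (lam : ℝ) : egf (fallFac lam 0) = 1 := by
  symm
  apply eq_egf_fallFac
  · simp
  · simp

lemma fallFac_neg (lam x : ℝ) (n : ℕ) :
    (-1 : ℝ) ^ n * fallFac (-lam) x n = fallFac lam (-x) n := by
  induction n with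
  | zero => simp [fallFac]
  | succ n ih =>
    rw [fallFac, fallFac, ← ih, pow_succ]
    ring

lemma evalNegHom_egf_fallFac (lam x : ℝ) :
    PowerSeries.evalNegHom (egf (fallFac (-lam) x)) = egf (fallFac lam (-x)) := by
  rw [evalNegHom_egf]
  exact congrArg egf (funext fun n => fallFac_neg lam x n)

/-- The recursion for the degenerate Euler numbers as an identity of generating functions. -/
lemma egf_degE_mul (lam : ℝ) : egf (degE lam) * (egf (fallFac lam 1) + 1) = 2 := by
  rw [mul_add, mul_one, egf_mul]
  ext n
  rw [map_add, coeff_egf, coeff_egf, ← add_div, Finset.sum_range_succ]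
  have h2 : (2 : PowerSeries ℝ) = PowerSeries.C 2 := (map_ofNat PowerSeries.C 2).symm
  rw [h2, PowerSeries.coeff_C]
  cases n with
  | zero => norm_num [fallFac, degE]
  | succ n =>
    have hE : degE lam (n + 1) = -(1 / 2) * ∑ l ∈ Finset.range (n + 1),
        ((n + 1).choose l : ℝ) * degE lam l * fallFac lam 1 (n + 1 - l) := by
      rw [degE, Finset.sum_attach (Finset.range (n + 1)) fun l =>
        ((n + 1).choose l : ℝ) * degE lam l * fallFac lam 1 (n + 1 - l)]
    rw [if_neg n.succ_ne_zero, div_eq_zero_iff]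
    left
    simp only [Nat.choose_self, Nat.sub_self, fallFac, Nat.cast_one, one_mul, mul_one]
    linarith

lemma egf_degEP (lam x : ℝ) : egf (degEP lam x) = egf (degE lam) * egf (fallFac lam x) := by
  rw [egf_mul]
  rfl

/-- In closed form: `2 / ((1+λX)^{-1/λ} + 1) = 2 (1+λX)^{1/λ} / ((1+λX)^{1/λ} + 1)`. -/
lemma evalNegHom_egf_degE (lam : ℝ) :
    PowerSeries.evalNegHom (egf (degE (-lam))) = egf (degE lam) * egf (fallFac lam 1) := by
  have h1 := egf_degE_mul lam
  have h2 := congrArg PowerSeries.evalNegHom (egf_degE_mul (-lam))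
  rw [map_mul, map_add, map_one, evalNegHom_egf_fallFac, map_ofNat] at h2
  have h3 : egf (fallFac lam (-1)) * egf (fallFac lam 1) = 1 := by
    rw [egf_fallFac_add, neg_add_cancel, egf_fallFac_zero]
  have h4 : egf (fallFac lam 1) + 1 ≠ 0 := by
    intro h
    rw [h, mul_zero] at h1
    have h5 := congrArg PowerSeries.constantCoeff h1
    rw [map_zero, map_ofNat] at h5
    exact two_ne_zero h5.symm
  apply mul_right_cancel₀ h4
  linear_combination egf (fallFac lam 1) * h2 - egf (fallFac lam 1) * h1
    - PowerSeries.evalNegHom (egf (degE (-lam))) * h3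

/-- Reflection formula: `ℰ_{n,λ}(1-x) = (-1)^n ℰ_{n,-λ}(x)`. -/
theorem degEP_reflection (lam x : ℝ) (n : ℕ) :
    degEP lam (1 - x) n = (-1 : ℝ) ^ n * degEP (-lam) x n := by
  refine egf_injective (b := fun n => (-1 : ℝ) ^ n * degEP (-lam) x n) ?_ n
  rw [← evalNegHom_egf, egf_degEP, egf_degEP, map_mul, evalNegHom_egf_fallFac,
    evalNegHom_egf_degE, mul_assoc, egf_fallFac_add, sub_eq_add_neg]
end

section
/- For all real numbers λ, x₁, x₂ and every positive integer n, Σ_{k=0}^{n} k·B_{k,n}(x₁,x₂|λ) = n·x₁·(1+x₁−x₂−λ)_{n−1,λ}. -/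
/-!
The absorption identity `(k+1) C(m+1,k+1) = (m+1) C(m,k)` and the left recursion
`(x₁)_{k+1,λ} = x₁ (x₁-λ)_{k,λ}` (`fallFac_succ_left`) pull the factor `n x₁` out of the sum.
What remains is `Σ_k C(n-1,k) (x₁-λ)_{k,λ} (1-x₂)_{n-1-k,λ}`, which is evaluated by the
Chu–Vandermonde identity for λ-falling factorials (`fallFac_add`).
-/

open Finset

lemma fallFac_succ_left (lam x : ℝ) (n : ℕ) :
    fallFac lam x (n + 1) = x * fallFac lam (x - lam) n := by
  induction n with
  | zero => simp [fallFac]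
  | succ n ih =>
    rw [fallFac, ih, fallFac]
    push_cast
    ring

/-- The Chu–Vandermonde identity for λ-falling factorials. In the induction step, Pascal's rule
splits the sum, and for `i + j = n` the two last factors recombine as
`(x - iλ) + (y - jλ) = (x + y) - nλ`. -/
lemma fallFac_add (lam x y : ℝ) (n : ℕ) :
    fallFac lam (x + y) n =
      ∑ ij ∈ antidiagonal n, (n.choose ij.1 : ℝ) * (fallFac lam x ij.1 * fallFac lam y ij.2) := by
  induction n with
  | zero => simp [fallFac]
  | succ n ih =>
    rw [sum_antidiagonal_choose_succ_mul (fun i j => fallFac lam x i * fallFac lam y j),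
      ← sum_add_distrib, fallFac, ih, sum_mul]
    refine sum_congr rfl fun ij hij => ?_
    have h : ij.1 + ij.2 = n := mem_antidiagonal.mp hij
    have hn : (n : ℝ) = ij.1 + ij.2 := by rw [← h]; push_cast; rfl
    rw [← Nat.choose_symm_of_eq_add h.symm, fallFac, fallFac, hn]
    ring

/-- `Σ_{k=0}^n k B_{k,n}(x₁,x₂|λ) = n x₁ (1+x₁-x₂-λ)_{n-1,λ}` for `n ≥ 1`. -/
theorem bern2_sum_mul (lam x1 x2 : ℝ) (n : ℕ) (hn : 0 < n) :
    ∑ k ∈ Finset.range (n + 1), (k : ℝ) * bern2 lam x1 x2 k n =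
      (n : ℝ) * x1 * fallFac lam (1 + x1 - x2 - lam) (n - 1) := by 
  obtain ⟨m, rfl⟩ : ∃ m, n = m + 1 := ⟨n - 1, by omega⟩
  rw [sum_range_succ', Nat.add_sub_cancel,
    show 1 + x1 - x2 - lam = (x1 - lam) + (1 - x2) by ring, fallFac_add,
    Nat.sum_antidiagonal_eq_sum_range_succ_mk, mul_sum, Nat.cast_zero, zero_mul, add_zero]
  refine sum_congr rfl fun k _ => ?_
  have h : ((m + 1 : ℕ) : ℝ) * (m.choose k : ℝ) =
      ((m + 1).choose (k + 1) : ℝ) * ((k + 1 : ℕ) : ℝ) := by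
    exact_mod_cast Nat.add_one_mul_choose_eq m k
  rw [bern2, fallFac_succ_left, Nat.add_sub_add_right]
  linear_combination (-(x1 * fallFac lam (x1 - lam) k * fallFac lam (1 - x2) (m - k))) * h
end
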